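/- arXiv:0709.4485 — 3 statements merged into one kernel-verified Lean document; each statement's English description precedes it below -/
import Mathlib

section
/- Riemann-Roch criterion, necessity: In the abstract setting, if the Riemann-Roch formula r(D) − r(K − D) = deg(D) + 1 − g holds for all D ∈ Div(X), then both of the following properties hold: (RR1): for every D ∈ Div(X) there exists ν ∈ N such that ε(D) + ε(ν − D) = 1; and (RR2): for every D ∈ Div(X) with deg(D) = g − 1 one has ε(D) + ε(K − D) = 0 (in ℤ/2ℤ). -/
/-!
A divisor has rank `-1` exactly when its linear system is empty, so in degree `g - 1`, where the
formula reads `r(D) = r(K - D)`, the systems `|D|` and `|K - D|` are empty together. This is (RR2).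

For (RR1), suppose first that `|D| = ∅`. The formula gives `r(K - D) = g - 2 - deg D`, and an
effective `E` realising this rank has `deg E = g - 1 - deg D` and `|K - D - E| = ∅`. By (RR2),
`ν = D + E` is non-special, and `ν - D = E` is effective. In particular non-special divisors exist:
apply this to a divisor of negative degree. If `|D| ≠ ∅`, any non-special `ν` works, since
`|ν - D| ≠ ∅` would make `|ν|` nonempty by addition.
-/

open scoped Classical

noncomputable section

/-- Degree of a divisor (finitely supported `ℤ`-valued function). -/
def ADeg {X : Type} (D : X →₀ ℤ) : ℤ := D.sum fun _ n => n

/-- A divisor is effective if it is nonnegative everywhere. -/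
def AEff {X : Type} (D : X →₀ ℤ) : Prop := ∀ x, 0 ≤ D x

/-- `|D| ≠ ∅`: some effective divisor is `R`-equivalent to `D`. -/
def ALinNE {X : Type} (R : (X →₀ ℤ) → (X →₀ ℤ) → Prop) (D : X →₀ ℤ) : Prop :=
  ∃ E : X →₀ ℤ, AEff E ∧ R E D

/-- The set of numbers `deg E - 1` over effective divisors `E` with `|D - E| = ∅`;
the rank of `D` is the least element of this set. -/
def ARankSet {X : Type} (R : (X →₀ ℤ) → (X →₀ ℤ) → Prop) (D : X →₀ ℤ) : Set ℤ :=
  {n | ∃ E : X →₀ ℤ, AEff E ∧ ¬ ALinNE R (D - E) ∧ n = ADeg E - 1}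

/-- `ε(D) = 0` if `|D| ≠ ∅` and `ε(D) = 1` otherwise. -/
def AEps {X : Type} (R : (X →₀ ℤ) → (X →₀ ℤ) → Prop) (D : X →₀ ℤ) : ZMod 2 :=
  if ALinNE R D then 0 else 1

theorem adeg_add {X : Type} (D E : X →₀ ℤ) : ADeg (D + E) = ADeg D + ADeg E :=
  Finsupp.sum_add_index' (fun _ => rfl) (fun _ _ _ => rfl)

theorem adeg_sub {X : Type} (D E : X →₀ ℤ) : ADeg (D - E) = ADeg D - ADeg E := by
  have h := adeg_add (D - E) E
  rw [sub_add_cancel] at h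
  linarith

theorem adeg_nonneg {X : Type} {E : X →₀ ℤ} (hE : AEff E) : 0 ≤ ADeg E :=
  Finset.sum_nonneg fun x _ => hE x

theorem eq_zero_of_adeg_eq_zero {X : Type} {E : X →₀ ℤ} (hE : AEff E) (h : ADeg E = 0) :
    E = 0 := by
  have h' := (Finset.sum_eq_zero_iff_of_nonneg fun x _ => hE x).1 h
  ext x
  by_cases hx : x ∈ E.support
  · exact h' x hx
  · simpa using hx

/-- The characterisation `r(D) = -1 ↔ |D| = ∅`: zero is the only effective divisor of degree
zero. -/
theorem rank_eq_neg_one_iff {X : Type} {R : (X →₀ ℤ) → (X →₀ ℤ) → Prop} {D : X →₀ ℤ} {r : ℤ}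
    (hr : IsLeast (ARankSet R D) r) : r = -1 ↔ ¬ ALinNE R D := by
  obtain ⟨⟨E, hE, hDE, hrE⟩, hmin⟩ := hr
  constructor
  · intro h
    rwa [eq_zero_of_adeg_eq_zero hE (by linarith), sub_zero] at hDE
  · intro h
    have h1 : r ≤ -1 := hmin ⟨0, fun _ => le_rfl, by rwa [sub_zero], by simp [ADeg]⟩
    linarith [adeg_nonneg hE]

/-- Riemann-Roch criterion, necessity. -/
theorem riemann_roch_criterion_necessity {X : Type} [Nonempty X]
    (R : (X →₀ ℤ) → (X →₀ ℤ) → Prop)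
    (hEquiv : Equivalence R)
    (hE1 : ∀ D D' : X →₀ ℤ, R D D' → ADeg D = ADeg D')
    (hE2 : ∀ D₁ D₁' D₂ D₂' : X →₀ ℤ, R D₁ D₁' → R D₂ D₂' → R (D₁ + D₂) (D₁' + D₂'))
    (g : ℤ) (hg : 0 ≤ g)
    (K : X →₀ ℤ) (hK : ADeg K = 2 * g - 2)
    (rk : (X →₀ ℤ) → ℤ) (hrk : ∀ D, IsLeast (ARankSet R D) (rk D))
    (hRR : ∀ D : X →₀ ℤ, rk D - rk (K - D) = ADeg D + 1 - g) :
    (∀ D : X →₀ ℤ, ∃ ν : X →₀ ℤ, ADeg ν = g - 1 ∧ ¬ ALinNE R ν ∧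
        AEps R D + AEps R (ν - D) = 1) ∧
    (∀ D : X →₀ ℤ, ADeg D = g - 1 → AEps R D + AEps R (K - D) = 0) := by
  have rr2 : ∀ D : X →₀ ℤ, ADeg D = g - 1 → (ALinNE R D ↔ ALinNE R (K - D)) := by
    intro D hD
    have h : rk D = rk (K - D) := by linarith [hRR D]
    rw [← not_iff_not, ← rank_eq_neg_one_iff (hrk D), ← rank_eq_neg_one_iff (hrk (K - D)), h]
  have key : ∀ D : X →₀ ℤ, ¬ ALinNE R D → ∃ ν : X →₀ ℤ, ADeg ν = g - 1 ∧ ¬ ALinNE R ν ∧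
      ALinNE R (ν - D) := by
    intro D hD
    have hr := (rank_eq_neg_one_iff (hrk D)).2 hD
    obtain ⟨E, hE, hne, hdeg⟩ := (hrk (K - D)).1
    have hν : ADeg (D + E) = g - 1 := by
      rw [adeg_add]
      linarith [hRR D]
    refine ⟨D + E, hν, ?_, E, hE, ?_⟩
    · rwa [rr2 _ hν, ← sub_sub]
    · rw [add_sub_cancel_left]
      exact hEquiv.refl E
  refine ⟨fun D => ?_, fun D hD => ?_⟩
  · by_cases hD : ALinNE R D
    · obtain ⟨x⟩ := ‹Nonempty X›
      have hneg : ¬ ALinNE R (Finsupp.single x (-1)) := by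
        rintro ⟨E, hE, hR⟩
        have h := hE1 _ _ hR
        have h2 : ADeg (Finsupp.single x (-1)) = -1 := Finsupp.sum_single_index rfl
        linarith [adeg_nonneg hE]
      obtain ⟨ν, hν, hνe, -⟩ := key _ hneg
      have hs : ¬ ALinNE R (ν - D) := by
        rintro ⟨F, hF, hFR⟩
        obtain ⟨E, hE, hER⟩ := hD
        refine hνe ⟨F + E, fun x => add_nonneg (hF x) (hE x), ?_⟩
        simpa using hE2 _ _ _ _ hFR hER
      exact ⟨ν, hν, hνe, by simp [AEps, hD, hs]⟩
    · obtain ⟨ν, hν, hνe, hs⟩ := key D hD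
      exact ⟨ν, hν, hνe, by simp [AEps, hD, hs]⟩
  · have h := rr2 D hD
    by_cases hD' : ALinNE R D
    · simp [AEps, hD', h.1 hD']
    · have h' : ¬ ALinNE R (K - D) := fun hh => hD' (h.2 hh)
      simp only [AEps, if_neg hD', if_neg h']
      decide
end
end

section
/- Rank formula for graphs via permutations: Let G be a finite connected loopless multigraph. For every divisor D on G, the number r(D) + 1 is the least element of the set {deg⁺(D' − ν_≺) : D' a divisor with D' ~ D, ≺ a linear order on V}; in other words, r(D) = (min over D' ~ D and linear orders ≺ on V of deg⁺(D' − ν_≺)) − 1. -/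
/-!
The proof rests on two facts about the divisors `ν_≺`.

* No divisor `D ≤ ν_≺` is equivalent to an effective one (`not_linNE_of_le_nuOrd`): if `D + Δf`
  were effective, then at the `≺`-least vertex `v` of the set where `f` is minimal, every earlier
  neighbour has larger `f`, so the value at `v` is at most `ν_≺ v - Σ_{w ≺ v} m v w = -1`.
* Conversely, if `|D| = ∅` then `D` is equivalent to some `D' ≤ ν_≺` (`exists_le_nuOrd`). One takes
  `D'` to be `q`-reduced, and `≺` the order in which Dhar's burning algorithm burns the vertices.

Since `(D' - ν_≺)⁺` is the least effective `E` with `D' - E ≤ ν_≺`, these two facts turn the minimum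
defining the rank into the minimum of `deg⁺(D' - ν_≺)`.

The existence of a `q`-reduced divisor uses a function `u ≥ 0` with `u q = 0` whose Laplacian is
at least `1` away from `q` (`exists_strictly_superharmonic`). Adding a large multiple of `Δu` makes
any divisor nonnegative off `q`. Among the equivalent divisors nonnegative off `q`, the potential
`Σ u v * D v` is nonnegative, and firing a set avoiding `q` strictly decreases it because `Δ` is
self-adjoint; hence a minimizer admits no legal firing of such a set.
-/

open scoped Classical

noncomputable section

/-- A divisor `D'` is equivalent to `D` if `D - D'` is the principal divisor of some
integer-valued function `f` on the vertices. -/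
def GEquiv {V : Type} [Fintype V] (m : V → V → ℕ) (D D' : V → ℤ) : Prop :=
  ∃ f : V → ℤ, ∀ v, D v - D' v = ∑ w, (m v w : ℤ) * (f v - f w)

/-- A divisor is effective if it is nonnegative everywhere. -/
def GEff {V : Type} (D : V → ℤ) : Prop := ∀ v, 0 ≤ D v

/-- `|D| ≠ ∅`: some effective divisor is equivalent to `D`. -/
def GLinNE {V : Type} [Fintype V] (m : V → V → ℕ) (D : V → ℤ) : Prop :=
  ∃ E : V → ℤ, GEff E ∧ GEquiv m E D

/-- The set of numbers `deg E - 1` over effective divisors `E` with `|D - E| = ∅`;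
the rank of `D` is the least element of this set. -/
def GRankSet {V : Type} [Fintype V] (m : V → V → ℕ) (D : V → ℤ) : Set ℤ :=
  {n | ∃ E : V → ℤ, GEff E ∧ ¬ GLinNE m (fun v => D v - E v) ∧ n = (∑ v, E v) - 1}

/-- `deg⁺(D) = Σ_v max{D(v), 0}`. -/
def GDegPlus {V : Type} [Fintype V] (D : V → ℤ) : ℤ := ∑ v, max (D v) 0

/-- The divisor `ν_≺` associated to a linear order on the vertices:
`ν_≺(v) = (Σ_{w ≺ v} m v w) - 1`. -/
def nuOrd {V : Type} [Fintype V] (m : V → V → ℕ) (L : LinearOrder V) (v : V) : ℤ :=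
  (∑ w ∈ Finset.univ.filter (fun w => L.lt w v), (m v w : ℤ)) - 1

/-! ### The Laplacian and linear equivalence -/

/-- The Laplacian of `f`, that is, the principal divisor of `f`. -/
def lap {V : Type} [Fintype V] (m : V → V → ℕ) (f : V → ℤ) (v : V) : ℤ :=
  ∑ w, (m v w : ℤ) * (f v - f w)

lemma lap_add {V : Type} [Fintype V] (m : V → V → ℕ) (f g : V → ℤ) (v : V) :
    lap m (fun x => f x + g x) v = lap m f v + lap m g v := by
  unfold lap
  rw [← Finset.sum_add_distrib]
  exact Finset.sum_congr rfl fun w _ => by ring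

lemma lap_smul {V : Type} [Fintype V] (m : V → V → ℕ) (c : ℤ) (f : V → ℤ) (v : V) :
    lap m (fun x => c * f x) v = c * lap m f v := by
  unfold lap
  rw [Finset.mul_sum]
  exact Finset.sum_congr rfl fun w _ => by ring

lemma GEquiv.trans {V : Type} [Fintype V] {m : V → V → ℕ} {A B C : V → ℤ}
    (h₁ : GEquiv m A B) (h₂ : GEquiv m B C) : GEquiv m A C := by
  obtain ⟨f, hf⟩ := h₁
  obtain ⟨g, hg⟩ := h₂
  refine ⟨fun x => f x + g x, fun v => ?_⟩
  have h := lap_add m f g v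
  unfold lap at h
  rw [h, ← hf, ← hg]
  ring

lemma GEquiv.symm {V : Type} [Fintype V] {m : V → V → ℕ} {A B : V → ℤ}
    (h : GEquiv m A B) : GEquiv m B A := by
  obtain ⟨f, hf⟩ := h
  refine ⟨fun x => -1 * f x, fun v => ?_⟩
  have h := lap_smul m (-1) f v
  unfold lap at h
  rw [h, ← hf]
  ring

/-- The Laplacian is self-adjoint. -/
lemma sum_mul_lap_comm {V : Type} [Fintype V] (m : V → V → ℕ) (hsymm : ∀ v w, m v w = m w v)
    (a b : V → ℤ) : ∑ v, a v * lap m b v = ∑ v, b v * lap m a v := by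
  have key : ∑ v, ∑ w, (m v w : ℤ) * (a v * b w) = ∑ v, ∑ w, (m v w : ℤ) * (b v * a w) := by
    rw [Finset.sum_comm]
    refine Finset.sum_congr rfl fun v _ => Finset.sum_congr rfl fun w _ => ?_
    rw [hsymm w v]; ring
  have expand : ∀ a b : V → ℤ, ∑ v, a v * lap m b v
      = ∑ v, ∑ w, (m v w : ℤ) * (a v * b v) - ∑ v, ∑ w, (m v w : ℤ) * (a v * b w) := by
    intro a b
    rw [← Finset.sum_sub_distrib]
    refine Finset.sum_congr rfl fun v _ => ?_
    unfold lap
    rw [← Finset.sum_sub_distrib, Finset.mul_sum]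
    exact Finset.sum_congr rfl fun w _ => by ring
  rw [expand a b, expand b a, key]
  congr 1
  exact Finset.sum_congr rfl fun v _ => Finset.sum_congr rfl fun w _ => by ring

/-- The indicator function of a set of vertices. -/
def ind {V : Type} (S : Finset V) (v : V) : ℤ := if v ∈ S then 1 else 0

lemma lap_ind_of_mem {V : Type} [Fintype V] (m : V → V → ℕ) (S : Finset V) {v : V} (hv : v ∈ S) :
    lap m (ind S) v = ∑ w ∈ Finset.univ.filter (fun w => w ∉ S), (m v w : ℤ) := by
  unfold lap ind
  rw [Finset.sum_filter]
  refine Finset.sum_congr rfl fun w _ => ?_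
  by_cases hw : w ∈ S <;> simp [hv, hw]

lemma lap_ind_of_notMem {V : Type} [Fintype V] (m : V → V → ℕ) (S : Finset V) {v : V}
    (hv : v ∉ S) : lap m (ind S) v = -∑ w ∈ S, (m v w : ℤ) := by
  unfold lap ind
  rw [← Finset.sum_neg_distrib, ← Finset.sum_filter_add_sum_filter_not Finset.univ (· ∈ S)]
  rw [Finset.sum_eq_zero (s := Finset.univ.filter (fun w => w ∉ S))]
  · simp only [Finset.filter_mem_eq_inter, Finset.univ_inter, add_zero]
    exact Finset.sum_congr rfl fun w hw => by simp [hv, hw]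
  · intro w hw
    simp at hw
    simp [hv, hw]

/-! ### Reduced divisors -/

lemma exists_edge_of_mem_of_notMem {V : Type} (m : V → V → ℕ)
    (hconn : ∀ v w : V, Relation.ReflTransGen (fun a b => 0 < m a b) v w)
    (B : Finset V) {q x : V} (hq : q ∈ B) (hx : x ∉ B) : ∃ a ∈ B, ∃ b ∉ B, 0 < m a b := by
  by_contra! h
  have : ∀ y, Relation.ReflTransGen (fun a b => 0 < m a b) q y → y ∈ B := by
    intro y hy
    induction hy with
    | refl => exact hq
    | tail _ hab ih =>
      by_contra hc
      exact absurd (h _ ih _ hc) (by omega)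
  exact hx (this x (hconn q x))

/-- There is a nonnegative function vanishing at `q` whose Laplacian is at least `1` off `q`.
The set `B` on which the bound holds grows one vertex at a time: scaling `u` and adding the
indicator of the complement of `B` keeps the bound on `B` and gains it at the vertices adjacent
to `B`. -/
lemma exists_strictly_superharmonic {V : Type} [Fintype V] (m : V → V → ℕ)
    (hsymm : ∀ v w, m v w = m w v)
    (hconn : ∀ v w : V, Relation.ReflTransGen (fun a b => 0 < m a b) v w) (q : V) :
    ∃ u : V → ℤ, (∀ v, 0 ≤ u v) ∧ u q = 0 ∧ ∀ v, v ≠ q → 1 ≤ lap m u v := by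
  let P : Finset V → Prop := fun B => q ∈ B ∧ ∃ u : V → ℤ, (∀ v, 0 ≤ u v) ∧ u q = 0 ∧
    (∀ v, v ≠ q → 0 ≤ lap m u v) ∧ ∀ v ∈ B, v ≠ q → 1 ≤ lap m u v
  have h0 : P {q} := ⟨by simp, fun _ => 0, by simp, rfl, by simp [lap], by simp⟩
  obtain ⟨B, hB, hmax⟩ := (Set.toFinite {B | P B}).exists_maximal ⟨_, h0⟩
  obtain ⟨hqB, u, hu0, huq, hu, huB⟩ := hB
  by_cases hall : ∀ x, x ∈ B
  · exact ⟨u, hu0, huq, fun v hv => huB v (hall v) hv⟩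
  exfalso
  push Not at hall
  obtain ⟨x, hx⟩ := hall
  obtain ⟨a, ha, b, hb, hab⟩ := exists_edge_of_mem_of_notMem m hconn B hqB hx
  -- `K` exceeds every vertex degree.
  set K : ℤ := 1 + ∑ v, ∑ w, (m v w : ℤ) with hK
  have hKv : ∀ v, ∑ w, (m v w : ℤ) + 1 ≤ K := fun v => by
    have := Finset.single_le_sum (f := fun v => ∑ w, (m v w : ℤ))
      (fun i _ => Finset.sum_nonneg fun j _ => Int.natCast_nonneg _) (Finset.mem_univ v)
    linarith
  have hdeg : ∀ v, ∑ w ∈ Bᶜ, (m v w : ℤ) ≤ ∑ w, (m v w : ℤ) := fun v =>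
    Finset.sum_le_sum_of_subset_of_nonneg (Finset.subset_univ _)
      fun i _ _ => Int.natCast_nonneg _
  have hK0 : 0 ≤ K := by
    have := hKv q
    have : (0 : ℤ) ≤ ∑ w, (m q w : ℤ) := Finset.sum_nonneg fun j _ => Int.natCast_nonneg _
    linarith
  have hlap : ∀ v, lap m (fun x => K * u x + ind Bᶜ x) v = K * lap m u v + lap m (ind Bᶜ) v :=
    fun v => by rw [lap_add m (fun x => K * u x), lap_smul]
  have hin : ∀ v ∈ B, v ≠ q → 1 ≤ lap m (fun x => K * u x + ind Bᶜ x) v := by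
    intro v hv hvq
    rw [hlap, lap_ind_of_notMem m _ (by simpa using hv)]
    have := mul_le_mul_of_nonneg_left (huB v hv hvq) hK0
    linarith [hKv v, hdeg v]
  have hout : ∀ v, v ∉ B → ∑ w ∈ B, (m v w : ℤ) ≤ lap m (fun x => K * u x + ind Bᶜ x) v := by
    intro v hv
    rw [hlap, lap_ind_of_mem m _ (by simpa using hv)]
    have h1 : 0 ≤ K * lap m u v := mul_nonneg hK0 (hu v (by rintro rfl; exact hv hqB))
    have h2 : (Finset.univ.filter fun w => w ∉ Bᶜ) = B := by ext; simp
    rw [h2]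
    linarith
  have hP : P (insert b B) := by
    refine ⟨by simp [hqB], fun x => K * u x + ind Bᶜ x, ?_, ?_, ?_, ?_⟩
    · intro v
      have := mul_nonneg hK0 (hu0 v)
      have : 0 ≤ ind Bᶜ v := by unfold ind; split_ifs <;> simp
      linarith
    · simp [huq, ind, hqB]
    · intro v hv
      by_cases hvB : v ∈ B
      · linarith [hin v hvB hv]
      · exact (Finset.sum_nonneg fun j _ => Int.natCast_nonneg _).trans (hout v hvB)
    · intro v hv hvq
      rcases Finset.mem_insert.1 hv with rfl | hv
      · have h1 := Finset.single_le_sum (f := fun w => (m v w : ℤ))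
          (fun j _ => Int.natCast_nonneg _) ha
        have h2 := hout v hb
        rw [hsymm] at hab
        omega
      · exact hin v hv hvq
  exact hb (hmax hP (Finset.subset_insert b B) (Finset.mem_insert_self b B))

/-- Existence of `q`-reduced divisors: `D` is equivalent to a divisor that is nonnegative off `q`
and from which no nonempty set avoiding `q` can be fired legally. -/
lemma exists_reduced {V : Type} [Fintype V] (m : V → V → ℕ)
    (hsymm : ∀ v w, m v w = m w v)
    (hconn : ∀ v w : V, Relation.ReflTransGen (fun a b => 0 < m a b) v w) (q : V) (D : V → ℤ) :
    ∃ D' : V → ℤ, GEquiv m D' D ∧ (∀ v, v ≠ q → 0 ≤ D' v) ∧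
      ∀ S : Finset V, S.Nonempty → q ∉ S →
        ∃ v ∈ S, D' v < ∑ w ∈ Finset.univ.filter (fun w => w ∉ S), (m v w : ℤ) := by
  obtain ⟨u, hu0, huq, hu⟩ := exists_strictly_superharmonic m hsymm hconn q
  let F : Set (V → ℤ) := {A | GEquiv m A D ∧ ∀ v, v ≠ q → 0 ≤ A v}
  let Φ : (V → ℤ) → ℤ := fun A => ∑ v, u v * A v
  have hne : F.Nonempty := by
    refine ⟨fun v => D v + (∑ w, |D w|) * lap m u v, ⟨fun x => (∑ w, |D w|) * u x, fun v => ?_⟩,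
      fun v hv => ?_⟩
    · have := lap_smul m (∑ w, |D w|) u v
      unfold lap at this ⊢
      rw [this]; ring
    · have h1 := Finset.single_le_sum (f := fun w => |D w|)
          (fun j _ => abs_nonneg _) (Finset.mem_univ v)
      have h2 := mul_le_mul_of_nonneg_left (hu v hv)
        ((abs_nonneg (D v)).trans h1)
      have h3 := neg_abs_le (D v)
      simp only at h1 h2 ⊢
      linarith
  have hΦ : ∀ A ∈ F, 0 ≤ Φ A := fun A hA => Finset.sum_nonneg fun v _ => by
    by_cases hv : v = q
    · simp [hv, huq]
    · exact mul_nonneg (hu0 v) (hA.2 v hv)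
  obtain ⟨A, hA, hmin⟩ := (measure fun A => (Φ A).toNat).wf.has_min F hne
  refine ⟨A, hA.1, hA.2, fun S hS hqS => ?_⟩
  by_contra! hcon
  -- Firing `S` is legal at `A`, stays in `F` and decreases `Φ`.
  have hmem : (fun v => A v - lap m (ind S) v) ∈ F := by
    refine ⟨GEquiv.trans (GEquiv.symm ⟨ind S, fun v => ?_⟩) hA.1, fun v hv => ?_⟩
    · simp [lap]
    · by_cases hvS : v ∈ S
      · have := hcon v hvS
        simp only [lap_ind_of_mem m S hvS]
        linarith
      · have h1 : (0 : ℤ) ≤ ∑ w ∈ S, (m v w : ℤ) :=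
          Finset.sum_nonneg fun j _ => Int.natCast_nonneg _
        simp only [lap_ind_of_notMem m S hvS]
        linarith [hA.2 v hv]
  have hdrop : Φ (fun v => A v - lap m (ind S) v) < Φ A := by
    have h1 : Φ (fun v => A v - lap m (ind S) v) = Φ A - ∑ v ∈ S, lap m u v := by
      have h2 : ∑ v ∈ S, lap m u v = ∑ v, ind S v * lap m u v := by simp [ind]
      rw [h2, ← sum_mul_lap_comm m hsymm, ← Finset.sum_sub_distrib]
      exact Finset.sum_congr rfl fun v _ => by ring
    have h3 : 0 < ∑ v ∈ S, lap m u v := Finset.sum_pos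
      (fun v hv => by
        have := hu v (by rintro rfl; exact hqS hv)
        omega) hS
    linarith
  have h4 := hmin _ hmem
  have h5 := hΦ _ hmem
  change ¬ (Φ _).toNat < (Φ A).toNat at h4
  omega

/-! ### Burning orders -/

/-- Dhar's burning algorithm, started with the complement of `S` burnt: `r` records the time at
which each vertex of `S` burns. -/
lemma exists_burning_times {V : Type} [Fintype V] (m : V → V → ℕ) (D : V → ℤ)
    (h : ∀ S : Finset V, S.Nonempty →
      ∃ v ∈ S, D v < ∑ w ∈ Finset.univ.filter (fun w => w ∉ S), (m v w : ℤ))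
    (S : Finset V) : ∃ r : V → ℕ, Set.InjOn r S ∧ ∀ v ∈ S,
      D v < ∑ w ∈ Finset.univ.filter (fun w => w ∉ S ∨ r w < r v), (m v w : ℤ) := by
  induction S using Finset.strongInduction with
  | H S ih =>
    rcases S.eq_empty_or_nonempty with rfl | hS
    · exact ⟨fun _ => 0, by simp, by simp⟩
    obtain ⟨v₀, hv₀, hlt⟩ := h S hS
    obtain ⟨r, hr, hr'⟩ := ih (S.erase v₀) (Finset.erase_ssubset hv₀)
    refine ⟨fun w => if w = v₀ then 0 else r w + 1, ?_, ?_⟩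
    · intro x hx y hy hxy
      by_cases h1 : x = v₀ <;> by_cases h2 : y = v₀ <;> simp [h1, h2] at hxy ⊢
      exact hr (by simpa [h1] using hx) (by simpa [h2] using hy) hxy
    · intro v hv
      by_cases h1 : v = v₀
      · subst h1
        simpa using hlt
      · refine (hr' v (Finset.mem_erase.2 ⟨h1, hv⟩)).trans_le
          (Finset.sum_le_sum_of_subset_of_nonneg ?_ fun i _ _ => Int.natCast_nonneg _)
        intro w
        by_cases h2 : w = v₀ <;> simp [h1, h2]

/-- A divisor class without effective members has a member dominated by some `ν_≺`. -/
lemma exists_le_nuOrd {V : Type} [Fintype V] [Nonempty V] (m : V → V → ℕ)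
    (hsymm : ∀ v w, m v w = m w v)
    (hconn : ∀ v w : V, Relation.ReflTransGen (fun a b => 0 < m a b) v w) (D : V → ℤ)
    (hD : ¬ GLinNE m D) :
    ∃ (D' : V → ℤ) (L : LinearOrder V), GEquiv m D' D ∧ ∀ v, D' v ≤ nuOrd m L v := by
  obtain ⟨q⟩ := ‹Nonempty V›
  obtain ⟨A, hA, hA0, hAS⟩ := exists_reduced m hsymm hconn q D
  have hq : A q < 0 := by
    by_contra! hq
    refine hD ⟨A, fun v => ?_, hA⟩
    by_cases hv : v = q
    · rwa [hv]
    · exact hA0 v hv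
  -- Since `A q < 0`, the vertex `q` catches fire spontaneously.
  have hall : ∀ S : Finset V, S.Nonempty →
      ∃ v ∈ S, A v < ∑ w ∈ Finset.univ.filter (fun w => w ∉ S), (m v w : ℤ) := by
    intro S hS
    by_cases hqS : q ∈ S
    · exact ⟨q, hqS, hq.trans_le (Finset.sum_nonneg fun j _ => Int.natCast_nonneg _)⟩
    · exact hAS S hS hqS
  obtain ⟨r, hr, hr'⟩ := exists_burning_times m A hall Finset.univ
  have hinj : Function.Injective r := fun x y hxy => hr (by simp) (by simp) hxy
  refine ⟨A, LinearOrder.lift' r hinj, hA, fun v => ?_⟩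
  have h1 := hr' v (Finset.mem_univ v)
  simp only [Finset.mem_univ, not_true_eq_false, false_or] at h1
  unfold nuOrd
  exact Int.le_sub_one_of_lt h1

/-! ### Divisors below `ν_≺`, and the rank formula -/

/-- A divisor dominated by some `ν_≺` is not equivalent to an effective one. -/
lemma not_linNE_of_le_nuOrd {V : Type} [Fintype V] [Nonempty V] (m : V → V → ℕ) (D : V → ℤ)
    (L : LinearOrder V) (hD : ∀ v, D v ≤ nuOrd m L v) : ¬ GLinNE m D := by
  rintro ⟨E, hE, f, hf⟩
  obtain ⟨x, hx⟩ := Finite.exists_min f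
  -- `v` is the first vertex in the order at which `f` attains its minimum.
  obtain ⟨v, hv, hvmin⟩ := (Finset.univ.filter fun y => f y = f x).exists_minimal
    ⟨x, by simp⟩
  have hvx : f v = f x := by simpa using hv
  have hlt : ∀ w, L.lt w v → f v + 1 ≤ f w := by
    intro w hw
    have h1 := hx w
    have h2 : f w ≠ f x := fun h2 =>
      absurd (hvmin (by simpa using h2) (le_of_lt hw)) (not_le_of_gt hw)
    omega
  have hsum : ∑ w, (m v w : ℤ) * (f v - f w)
      ≤ -∑ w ∈ Finset.univ.filter (fun w => L.lt w v), (m v w : ℤ) := by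
    rw [Finset.sum_filter, ← Finset.sum_neg_distrib]
    refine Finset.sum_le_sum fun w _ => ?_
    have h0 : (0 : ℤ) ≤ m v w := Int.natCast_nonneg _
    split_ifs with h
    · nlinarith [hlt w h]
    · nlinarith [hx w]
  have h1 := hD v
  have h2 := hE v
  have h3 := hf v
  unfold nuOrd at h1
  linarith

/-- Rank formula for graphs via permutations. -/
theorem rank_formula_graphs {V : Type} [Fintype V] [Nonempty V]
    (m : V → V → ℕ)
    (hsymm : ∀ v w, m v w = m w v)
    (hloopless : ∀ v, m v v = 0)
    (hconn : ∀ v w : V, Relation.ReflTransGen (fun a b => 0 < m a b) v w)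
    (D : V → ℤ) (rD : ℤ) (hrD : IsLeast (GRankSet m D) rD) :
    IsLeast {n : ℤ | ∃ (D' : V → ℤ) (L : LinearOrder V), GEquiv m D' D ∧
      n = GDegPlus (fun v => D' v - nuOrd m L v)} (rD + 1) := by
  have lower : ∀ (D' : V → ℤ) (L : LinearOrder V), GEquiv m D' D →
      rD + 1 ≤ GDegPlus (fun v => D' v - nuOrd m L v) := by
    intro D' L hD'
    have hno : ¬ GLinNE m (fun v => D v - max (D' v - nuOrd m L v) 0) := by
      rintro ⟨E, hE, hED⟩
      refine not_linNE_of_le_nuOrd m (fun v => D' v - max (D' v - nuOrd m L v) 0) L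
        (fun v => ?_) ⟨E, hE, hED.trans ?_⟩
      · have := le_max_left (D' v - nuOrd m L v) 0
        linarith
      · obtain ⟨f, hf⟩ := hD'.symm
        exact ⟨f, fun v => by rw [← hf]; ring⟩
    have := hrD.2 ⟨_, fun v => le_max_right _ _, hno, rfl⟩
    unfold GDegPlus
    linarith
  refine ⟨?_, ?_⟩
  · obtain ⟨E, hE, hno, hdeg⟩ := hrD.1
    obtain ⟨A, L, hA, hAL⟩ := exists_le_nuOrd m hsymm hconn _ hno
    have hD' : GEquiv m (fun v => A v + E v) D := by
      obtain ⟨f, hf⟩ := hA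
      exact ⟨f, fun v => by rw [← hf]; ring⟩
    refine ⟨_, L, hD', le_antisymm (lower _ L hD') ?_⟩
    rw [hdeg, sub_add_cancel]
    exact Finset.sum_le_sum fun v _ => max_le (by linarith [hAL v]) (hE v)
  · rintro n ⟨D', L, hD', rfl⟩
    exact lower D' L hD'
end
end

section
/- Property (RR1) for graphs: Let G be a finite connected loopless multigraph of genus g = |E| − |V| + 1. For every divisor D on G there exists a divisor ν on G with deg(ν) = g − 1 and |ν| = ∅ such that exactly one of the two sets |D| and |ν − D| is empty. -/
/-!
The proof is a form of Dhar's burning algorithm. Say that a divisor `D` *burns* (`GBurns`) if no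
nonempty set `A` of vertices can fire legally, i.e. every such `A` contains a vertex `v` with fewer
than `∑ w ∉ A, m v w` chips; the case `A = V` says that `D` is not effective.

* If `|D| = ∅`, some divisor `D - Δf` burns (`exists_burns`). Consider the `f ≥ 0` for which
  `D - Δf` is nonnegative wherever `f > 0`. Each of them has a zero, as `D - Δf` is not effective,
  and then connectedness bounds `f`. For an `f` with largest total, `D - Δf` burns: if `A` could
  fire legally, `f + 1_A` would be a larger such function.
* A burning divisor `D'` lies below an orientation divisor (`exists_rank`): removing burning
  vertices one at a time orders `V` so that `D' ≤ ν`, where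
  `ν v = ∑ (w before v), m v w - 1`.
* Such a `ν` has degree `g - 1` (`sum_orient`) and `|ν| = ∅` (`orient_empty`): after adding `Δf`,
  the first vertex among the minimizers of `f` is negative.

If `|D| = ∅`, then `ν - (D - Δf) ≥ 0` shows that `|ν - D| ≠ ∅`. If `|D| ≠ ∅`, any such `ν` works,
because effective representatives of `D` and `ν - D` would add up to one of `ν`.
-/

open scoped Classical

noncomputable section

/-- The principal divisor of `f`, that is, the graph Laplacian applied to `f`. -/
def GLap {V : Type} [Fintype V] (m : V → V → ℕ) (f : V → ℤ) (v : V) : ℤ :=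
  ∑ w, (m v w : ℤ) * (f v - f w)

/-- No nonempty set of vertices can fire legally: each contains a vertex with fewer chips than
edges leaving the set. The whole vertex set is included, so a burning divisor is not effective. -/
def GBurns {V : Type} [Fintype V] (m : V → V → ℕ) (D : V → ℤ) : Prop :=
  ∀ A : Finset V, A.Nonempty → ∃ v ∈ A, D v < ∑ w, if w ∉ A then (m v w : ℤ) else 0

/-- The divisor `indegree - 1` of the acyclic orientation of the graph in which every edge points
towards its endpoint of larger rank. -/
def GOrient {V : Type} [Fintype V] (m : V → V → ℕ) (r : V → ℕ) (v : V) : ℤ :=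
  (∑ w, if r w < r v then (m v w : ℤ) else 0) - 1

lemma sum_lap {V : Type} [Fintype V] (m : V → V → ℕ) (hsymm : ∀ v w, m v w = m w v)
    (f : V → ℤ) : ∑ v, GLap m f v = 0 := by
  have h : ∑ v, GLap m f v = - ∑ v, GLap m f v := by
    unfold GLap
    conv_lhs => rw [Finset.sum_comm]
    rw [← Finset.sum_neg_distrib]
    refine Finset.sum_congr rfl fun v _ => ?_
    rw [← Finset.sum_neg_distrib]
    refine Finset.sum_congr rfl fun w _ => ?_
    rw [hsymm w v]; ring
  omega

/-- The functions `f ≥ 0` with `D - Δf ≥ 0` wherever `f > 0`; this holds for whatever is obtained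
from `0` by legal set firings. -/
def GGood {V : Type} [Fintype V] (m : V → V → ℕ) (D f : V → ℤ) : Prop :=
  ∀ v, 0 ≤ f v ∧ (0 < f v → 0 ≤ D v - GLap m f v)

/-- Along an edge out of a vertex `v`, a good function grows at most by an affine function of
`f v`, since the number of chips at `v` is at most the degree plus a bound on all the debts. -/
lemma good_bound {V : Type} [Fintype V] (m : V → V → ℕ) (hsymm : ∀ v w, m v w = m w v)
    (D : V → ℤ) {z v : V} (h : Relation.ReflTransGen (fun a b => 0 < m a b) z v) :
    ∃ B : ℤ, ∀ f, GGood m D f → f z = 0 → f v ≤ B := by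
  induction h with
  | refl => exact ⟨0, fun f _ h => h.le⟩
  | @tail a b _ hab ih =>
    obtain ⟨B, hB⟩ := ih
    refine ⟨(∑ w, (m a w : ℤ)) * B + (∑ w, (D w + |D w|)) - D a, fun f hf hz => ?_⟩
    have hlow : ∀ w, 0 ≤ D w - GLap m f w + |D w| := by
      intro w
      obtain ⟨h0, h1⟩ := hf w
      rcases h0.lt_or_eq with h | h
      · have := h1 h
        have := abs_nonneg (D w)
        linarith
      · have : GLap m f w ≤ 0 := by
          refine Finset.sum_nonpos fun u _ => ?_
          rw [← h]
          exact mul_nonpos_of_nonneg_of_nonpos (by positivity) (by linarith [(hf u).1])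
        have := neg_abs_le (D w)
        linarith
    have hup : D a - GLap m f a + |D a| ≤ ∑ w, (D w + |D w|) := by
      calc _ ≤ ∑ w, (D w - GLap m f w + |D w|) :=
            Finset.single_le_sum (f := fun w => D w - GLap m f w + |D w|)
              (fun w _ => hlow w) (Finset.mem_univ a)
        _ = _ := by
            have := sum_lap m hsymm f
            simp only [Finset.sum_add_distrib, Finset.sum_sub_distrib]
            linarith
    have hlap : GLap m f a = (∑ w, (m a w : ℤ)) * f a - ∑ w, (m a w : ℤ) * f w := by
      unfold GLap
      rw [Finset.sum_mul, ← Finset.sum_sub_distrib]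
      exact Finset.sum_congr rfl fun w _ => by ring
    have hb : f b ≤ ∑ w, (m a w : ℤ) * f w := by
      calc f b ≤ (m a b : ℤ) * f b :=
            le_mul_of_one_le_left (hf b).1 (by exact_mod_cast hab)
        _ ≤ _ := Finset.single_le_sum (f := fun w => (m a w : ℤ) * f w)
              (fun w _ => mul_nonneg (by positivity) (hf w).1) (Finset.mem_univ b)
    have hmul : (∑ w, (m a w : ℤ)) * f a ≤ (∑ w, (m a w : ℤ)) * B :=
      mul_le_mul_of_nonneg_left (hB f hf hz) (Finset.sum_nonneg fun _ _ => by positivity)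
    have := abs_nonneg (D a)
    linarith

lemma exists_burns {V : Type} [Fintype V] (m : V → V → ℕ) (hsymm : ∀ v w, m v w = m w v)
    (hconn : ∀ v w : V, Relation.ReflTransGen (fun a b => 0 < m a b) v w)
    (D : V → ℤ) (hD : ¬ GLinNE m D) : ∃ f, GBurns m (fun v => D v - GLap m f v) := by
  have hneg : ∀ f, ∃ v, D v - GLap m f v < 0 := by
    intro f
    by_contra! h
    refine hD ⟨fun v => D v - GLap m f v, h, fun v => - f v, fun v => ?_⟩
    simp only [GLap, sub_sub_cancel_left, ← Finset.sum_neg_distrib]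
    exact Finset.sum_congr rfl fun w _ => by ring
  choose B hB using fun z v => good_bound m hsymm D (hconn z v)
  have hbdd : ∀ f, GGood m D f → ∑ v, f v ≤ ∑ z, ∑ v, |B z v| := by
    intro f hf
    obtain ⟨z, hz⟩ := hneg f
    have hz0 : f z = 0 := by
      by_contra h
      exact absurd ((hf z).2 (lt_of_le_of_ne (hf z).1 (Ne.symm h))) (not_le.mpr hz)
    calc ∑ v, f v ≤ ∑ v, |B z v| :=
          Finset.sum_le_sum fun v _ => (hB z v f hf hz0).trans (le_abs_self _)
      _ ≤ _ := Finset.single_le_sum (f := fun z => ∑ v, |B z v|)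
          (fun _ _ => Finset.sum_nonneg fun _ _ => abs_nonneg _) (Finset.mem_univ z)
  obtain ⟨M, ⟨f, hf, rfl⟩, hmax⟩ := Int.exists_greatest_of_bdd
    (P := fun s => ∃ f, GGood m D f ∧ ∑ v, f v = s)
    ⟨_, by rintro _ ⟨f, hf, rfl⟩; exact hbdd f hf⟩
    ⟨0, 0, fun v => by simp, by simp⟩
  refine ⟨f, fun A hA => ?_⟩
  by_contra! hlegal
  let f' : V → ℤ := fun v => f v + if v ∈ A then 1 else 0
  have hgood : GGood m D f' := by
    intro v
    by_cases hv : v ∈ A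
    · refine ⟨by have := (hf v).1; simp only [f', hv, if_true]; omega, fun _ => ?_⟩
      have hl : GLap m f' v = GLap m f v + ∑ w, if w ∉ A then (m v w : ℤ) else 0 := by
        unfold GLap
        rw [← Finset.sum_add_distrib]
        refine Finset.sum_congr rfl fun w _ => ?_
        by_cases hw : w ∈ A <;> simp [f', hv, hw] <;> ring
      have := hlegal v hv
      linarith
    · have hfv : f' v = f v := by simp [f', hv]
      rw [hfv]
      refine ⟨(hf v).1, fun h => ?_⟩
      have hl : GLap m f' v ≤ GLap m f v := by
        refine Finset.sum_le_sum fun w _ => mul_le_mul_of_nonneg_left ?_ (by positivity)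
        rw [hfv]
        have : f w ≤ f' w := by simp only [f']; split_ifs <;> omega
        omega
      have := (hf v).2 h
      linarith
  have h1 := hmax _ ⟨f', hgood, rfl⟩
  have h2 : ∑ v, f' v = ∑ v, f v + A.card := by
    simp [f', Finset.sum_add_distrib]
  have h3 := hA.card_pos
  omega

/-- The vertices of `A` can be ranked so that each is burnt by the edges from the complement of
`A` and from lower-ranked vertices. -/
lemma exists_rank {V : Type} [Fintype V] (m : V → V → ℕ) (D : V → ℤ) (hD : GBurns m D)
    (n : ℕ) : ∀ A : Finset V, A.card = n → ∃ r : V → ℕ,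
      (∀ v ∈ A, ∀ w ∈ A, r v = r w → v = w) ∧
      ∀ v ∈ A, D v < ∑ w, if w ∉ A ∨ r w < r v then (m v w : ℤ) else 0 := by
  induction n with
  | zero =>
    intro A hA
    rw [Finset.card_eq_zero] at hA
    subst hA
    exact ⟨fun _ => 0, by simp, by simp⟩
  | succ n ih =>
    intro A hA
    obtain ⟨u, hu, hlt⟩ := hD A (Finset.card_pos.mp (by omega))
    obtain ⟨r, hinj, hr⟩ := ih (A.erase u) (by rw [Finset.card_erase_of_mem hu]; omega)
    refine ⟨fun v => if v = u then 0 else r v + 1, ?_, ?_⟩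
    · intro v hv w hw h
      by_cases h1 : v = u <;> by_cases h2 : w = u
      · rw [h1, h2]
      · simp [h1, h2] at h
      · simp [h1, h2] at h
      · exact hinj v (Finset.mem_erase.mpr ⟨h1, hv⟩) w (Finset.mem_erase.mpr ⟨h2, hw⟩)
          (by simpa [h1, h2] using h)
    · intro v hv
      by_cases h1 : v = u
      · subst h1
        simpa using hlt
      · refine (hr v (Finset.mem_erase.mpr ⟨h1, hv⟩)).trans_eq ?_
        refine Finset.sum_congr rfl fun w _ => ?_
        by_cases h2 : w = u <;> simp [h1, h2]

lemma sum_orient {V : Type} [Fintype V] (m : V → V → ℕ) (hsymm : ∀ v w, m v w = m w v)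
    (hloopless : ∀ v, m v v = 0) (numEdges : ℕ) (hE : 2 * numEdges = ∑ v, ∑ w, m v w)
    (r : V → ℕ) (hr : Function.Injective r) :
    ∑ v, GOrient m r v = (numEdges : ℤ) - Fintype.card V := by
  have h : (∑ v, ∑ w, if r w < r v then (m v w : ℤ) else 0)
      + (∑ v, ∑ w, if r w < r v then (m v w : ℤ) else 0) = ∑ v, ∑ w, (m v w : ℤ) := by
    conv_lhs => enter [2]; rw [Finset.sum_comm]
    rw [← Finset.sum_add_distrib]
    refine Finset.sum_congr rfl fun v _ => ?_
    rw [← Finset.sum_add_distrib]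
    refine Finset.sum_congr rfl fun w _ => ?_
    rw [hsymm w v]
    rcases lt_trichotomy (r v) (r w) with h | h | h
    · simp [h, h.not_gt]
    · simp [hr h, hloopless]
    · simp [h, h.not_gt]
  have hE' : 2 * (numEdges : ℤ) = ∑ v, ∑ w, (m v w : ℤ) := by exact_mod_cast hE
  simp only [GOrient, Finset.sum_sub_distrib, Finset.sum_const, Finset.card_univ, nsmul_eq_mul,
    mul_one]
  linarith

lemma orient_empty {V : Type} [Fintype V] [Nonempty V] (m : V → V → ℕ) (r : V → ℕ) :
    ¬ GLinNE m (GOrient m r) := by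
  rintro ⟨E, hEff, f, hf⟩
  obtain ⟨a, -, ha⟩ := Finset.exists_min_image Finset.univ f Finset.univ_nonempty
  obtain ⟨v, hv, hmin⟩ := Finset.exists_min_image (Finset.univ.filter fun v => f v = f a) r
    ⟨a, by simp⟩
  simp only [Finset.mem_filter, Finset.mem_univ, true_and] at hv hmin
  have h : (∑ w, if r w < r v then (m v w : ℤ) else 0) + ∑ w, (m v w : ℤ) * (f v - f w) ≤ 0 := by
    rw [← Finset.sum_add_distrib]
    refine Finset.sum_nonpos fun w _ => ?_
    have h1 := ha w (Finset.mem_univ w)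
    have h0 : (0 : ℤ) ≤ m v w := by positivity
    split_ifs with hw
    · -- `w` precedes `v`, hence is not a minimizer of `f`
      have h2 : f w ≠ f a := fun h => absurd (hmin w h) (not_le.mpr hw)
      have h3 : f v - f w ≤ -1 := by omega
      nlinarith
    · have h3 : f v - f w ≤ 0 := by omega
      nlinarith
  have h1 := hf v
  have h2 := hEff v
  unfold GOrient at h1
  linarith

/-- Property (RR1) for graphs: for every divisor `D` there is a non-special divisor
`ν` such that exactly one of the sets `|D|` and `|ν - D|` is empty. -/
theorem graph_RR1 {V : Type} [Fintype V] [Nonempty V]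
    (m : V → V → ℕ)
    (hsymm : ∀ v w, m v w = m w v)
    (hloopless : ∀ v, m v v = 0)
    (hconn : ∀ v w : V, Relation.ReflTransGen (fun a b => 0 < m a b) v w)
    (numEdges : ℕ) (hE : 2 * numEdges = ∑ v, ∑ w, m v w)
    (g : ℤ) (hg : g = (numEdges : ℤ) - (Fintype.card V : ℤ) + 1)
    (D : V → ℤ) :
    ∃ ν : V → ℤ, (∑ v, ν v) = g - 1 ∧ ¬ GLinNE m ν ∧
      Xor' (¬ GLinNE m D) (¬ GLinNE m (fun v => ν v - D v)) := by
  have hdeg : ∀ r : V → ℕ, Function.Injective r → ∑ v, GOrient m r v = g - 1 := by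
    intro r hr
    rw [sum_orient m hsymm hloopless numEdges hE r hr, hg]
    ring
  by_cases hD : GLinNE m D
  · let r : V → ℕ := fun v => (Fintype.equivFin V v : ℕ)
    have hr : Function.Injective r :=
      Fin.val_injective.comp (Fintype.equivFin V).injective
    refine ⟨GOrient m r, hdeg r hr, orient_empty m r, Or.inr ⟨?_, not_not.mpr hD⟩⟩
    rintro ⟨E', hE', f', hf'⟩
    obtain ⟨E, hE, f, hf⟩ := hD
    refine orient_empty m r ⟨fun v => E v + E' v, fun v => add_nonneg (hE v) (hE' v),
      fun v => f v + f' v, fun v => ?_⟩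
    have : E v + E' v - GOrient m r v = (E v - D v) + (E' v - (GOrient m r v - D v)) := by ring
    rw [this, hf, hf', ← Finset.sum_add_distrib]
    exact Finset.sum_congr rfl fun w _ => by ring
  · obtain ⟨f, hf⟩ := exists_burns m hsymm hconn D hD
    obtain ⟨r, hinj, hr⟩ := exists_rank m _ hf _ Finset.univ rfl
    have hr' : Function.Injective r := fun v w h =>
      hinj v (Finset.mem_univ v) w (Finset.mem_univ w) h
    refine ⟨GOrient m r, hdeg r hr', orient_empty m r, Or.inl ⟨hD, not_not.mpr ?_⟩⟩
    refine ⟨fun v => GOrient m r v - (D v - GLap m f v), fun v => ?_, f, fun v => ?_⟩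
    · have := hr v (Finset.mem_univ v)
      simp only [Finset.mem_univ, not_true_eq_false, false_or] at this
      simp only [GOrient]
      omega
    · simp only [GLap]
      ring
end
end
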